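/- Let α, β ≥ -1/2. There exists a constant C depending only on α and β such that for all θ, θ', φ ∈ (0,π) with |θ-φ| > 2|θ-θ'| one has sup_{t>0} |H̃_t^{α,β}(θ,φ) - H̃_t^{α,β}(θ',φ)| ≤ C (|θ-θ'| / |θ-φ|) · 1/μ_{α,β}^+(B(θ, |θ-φ|)). -/

import Mathlib

open MeasureTheory Real Set

noncomputable section

/-- The Jacobi measure `μ_{α,β}^+` on `(0,π)`: density
`(sin(θ/2))^(2α+1) (cos(θ/2))^(2β+1)` w.r.t. Lebesgue measure on `(0,π)`. -/
def jacobiMeasure (α β : ℝ) : Measure ℝ :=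
  (volume.restrict (Ioo 0 π)).withDensity
    (fun θ => ENNReal.ofReal (Real.sin (θ / 2) ^ (2 * α + 1) * Real.cos (θ / 2) ^ (2 * β + 1)))

/-- The ball `B(θ,r) = (θ-r, θ+r) ∩ (0,π)`. -/
def jacobiBall (θ r : ℝ) : Set ℝ := Ioo (θ - r) (θ + r) ∩ Ioo 0 π

/-- The measure `Π_α` on `[-1,1]`. -/
def PiMeasure (α : ℝ) : Measure ℝ :=
  if α = -(1 / 2) then (2 : ENNReal)⁻¹ • (Measure.dirac (-1) + Measure.dirac 1)
  else
    (volume.restrict (Icc (-1) 1)).withDensity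
      (fun u => ENNReal.ofReal
        (Real.Gamma (α + 1) / (Real.sqrt π * Real.Gamma (α + 1 / 2)) * (1 - u ^ 2) ^ (α - 1 / 2)))

/-- `q(θ,φ,u,v) = 1 - u sin(θ/2) sin(φ/2) - v cos(θ/2) cos(φ/2)`. -/
def qfun (θ φ u v : ℝ) : ℝ :=
  1 - u * Real.sin (θ / 2) * Real.sin (φ / 2) - v * Real.cos (θ / 2) * Real.cos (φ / 2)

/-- `Ψ^{α,β}(t,s) = sinh(t/2) / (cosh(t/2) - 1 + s)^(α+β+2)`. -/
def Psi (α β t s : ℝ) : ℝ :=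
  Real.sinh (t / 2) / (Real.cosh (t / 2) - 1 + s) ^ (α + β + 2)

/-- The Jacobi-Poisson kernel `H_t^{α,β}(θ,φ)`. -/
def Hker (α β t θ φ : ℝ) : ℝ :=
  ((2 : ℝ) ^ (-(α + β + 2)) / (jacobiMeasure α β (Ioo 0 π)).toReal) * Real.sinh (t / 2) *
    ∫ u, ∫ v, 1 / (Real.cosh (t / 2) - 1 + qfun θ φ u v) ^ (α + β + 2)
      ∂(PiMeasure β) ∂(PiMeasure α)

/-- The symmetrized kernel `H̃_t^{α,β}(θ,φ) = (1/4) sin θ sin φ H_t^{α+1,β+1}(θ,φ)`. -/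
def Htilde (α β t θ φ : ℝ) : ℝ :=
  (1 / 4) * Real.sin θ * Real.sin φ * Hker (α + 1) (β + 1) t θ φ

end

/-!
Write `A = sin (θ/2) sin (φ/2)`, `B = cos (θ/2) cos (φ/2)`, `ρ = (θ - φ)²/20`, and `q` for
`q(θ,φ,u,v)`, so that `q ≥ ρ + (1 - u) A + (1 - v) B`. Since `|∂_θ q| ≤ √q`, the values of `q` along
the segment from `θ` to `θ'` are comparable, and the mean value theorem bounds the increment of the
integrand `A B Ψ(t, q)` of the kernel by its derivative at `θ`. The factor `sinh (t/2)` costs only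
`√q`, whence a bound uniform in `t`: with `N = α + β + 4` the increment is at most a constant times
`|θ - θ'| q^(-N) (A + √q sin (φ/2)) (B + √q cos (φ/2))`.

The ball `B(θ, |θ - φ|)` has measure at most a constant times
`|θ - φ| (A + ρ)^(α + 1/2) (B + ρ)^(β + 1/2)`. These two powers are absorbed by the densities
`(1 - u²)^(α + 1/2)` and `(1 - v²)^(β + 1/2)`, because `(1 - u²) (A + ρ)` and `(1 - v²) (B + ρ)` are
at most `4 q`. What remains is an integral over the square which no longer depends on `α`, `β`, and
which is at most a constant times `1/ρ`, by integrating first in `v` and then in `u`.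
-/

section HalfAngles

/-- The product `sin (θ/2) sin (φ/2)`, the coefficient of `-u` in `qfun θ φ u v`. -/
noncomputable def sinHalfProd (θ φ : ℝ) : ℝ := sin (θ / 2) * sin (φ / 2)

/-- The product `cos (θ/2) cos (φ/2)`, the coefficient of `-v` in `qfun θ φ u v`. -/
noncomputable def cosHalfProd (θ φ : ℝ) : ℝ := cos (θ / 2) * cos (φ / 2)

variable {θ φ : ℝ}

lemma sin_half_pos (hθ : θ ∈ Ioo 0 π) : 0 < sin (θ / 2) :=
  sin_pos_of_pos_of_lt_pi (by linarith [hθ.1]) (by linarith [hθ.1, hθ.2])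

lemma cos_half_pos (hθ : θ ∈ Ioo 0 π) : 0 < cos (θ / 2) :=
  cos_pos_of_mem_Ioo ⟨by linarith [hθ.1, hθ.2], by linarith [hθ.2]⟩

lemma sinHalfProd_pos (hθ : θ ∈ Ioo 0 π) (hφ : φ ∈ Ioo 0 π) : 0 < sinHalfProd θ φ :=
  mul_pos (sin_half_pos hθ) (sin_half_pos hφ)

lemma cosHalfProd_pos (hθ : θ ∈ Ioo 0 π) (hφ : φ ∈ Ioo 0 π) : 0 < cosHalfProd θ φ :=
  mul_pos (cos_half_pos hθ) (cos_half_pos hφ)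

lemma sinHalfProd_mul_cosHalfProd (θ φ : ℝ) :
    sinHalfProd θ φ * cosHalfProd θ φ = 1 / 4 * sin θ * sin φ := by
  have hθ : sin θ = 2 * sin (θ / 2) * cos (θ / 2) := by rw [← sin_two_mul]; ring_nf
  have hφ : sin φ = 2 * sin (φ / 2) * cos (φ / 2) := by rw [← sin_two_mul]; ring_nf
  rw [sinHalfProd, cosHalfProd, hθ, hφ]
  ring

lemma abs_half_sub_half (x y : ℝ) : |x / 2 - y / 2| = |x - y| / 2 := by
  rw [← sub_div, abs_div, abs_two]

lemma abs_sin_half_sub_sin_half_le (x y : ℝ) : |sin (x / 2) - sin (y / 2)| ≤ |x - y| / 2 :=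
  (abs_sin_sub_sin_le _ _).trans_eq (abs_half_sub_half x y)

lemma abs_cos_half_sub_cos_half_le (x y : ℝ) : |cos (x / 2) - cos (y / 2)| ≤ |x - y| / 2 :=
  (abs_cos_sub_cos_le _ _).trans_eq (abs_half_sub_half x y)

lemma sq_le_five_mul_of_abs_sub_le {x y r : ℝ} (hx : 0 ≤ x) (hy : 0 ≤ y)
    (h : |x - y| ≤ |r| / 2) : x ^ 2 ≤ 5 * (x * y + r ^ 2 / 20) := by
  have hxy : (x - y) ^ 2 ≤ r ^ 2 / 4 := by
    calc (x - y) ^ 2 ≤ (|r| / 2) ^ 2 := sq_le_sq' (abs_le.1 h).1 (abs_le.1 h).2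
      _ = r ^ 2 / 4 := by rw [div_pow, sq_abs]; norm_num
  nlinarith [mul_nonneg hx hy, sq_nonneg y]

lemma sq_sin_half_le (hθ : θ ∈ Ioo 0 π) (hφ : φ ∈ Ioo 0 π) :
    sin (θ / 2) ^ 2 ≤ 5 * (sinHalfProd θ φ + (θ - φ) ^ 2 / 20) :=
  sq_le_five_mul_of_abs_sub_le (sin_half_pos hθ).le (sin_half_pos hφ).le
    (abs_sin_half_sub_sin_half_le θ φ)

lemma sq_cos_half_le (hθ : θ ∈ Ioo 0 π) (hφ : φ ∈ Ioo 0 π) :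
    cos (θ / 2) ^ 2 ≤ 5 * (cosHalfProd θ φ + (θ - φ) ^ 2 / 20) :=
  sq_le_five_mul_of_abs_sub_le (cos_half_pos hθ).le (cos_half_pos hφ).le
    (abs_cos_half_sub_cos_half_le θ φ)

lemma sinHalfProd_comm (θ φ : ℝ) : sinHalfProd θ φ = sinHalfProd φ θ := mul_comm _ _

lemma cosHalfProd_comm (θ φ : ℝ) : cosHalfProd θ φ = cosHalfProd φ θ := mul_comm _ _

end HalfAngles

section Qfun

variable {θ φ z u v : ℝ}

lemma qfun_eq (θ φ u v : ℝ) :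
    qfun θ φ u v =
      1 - cos ((θ - φ) / 2) + (1 - u) * sinHalfProd θ φ + (1 - v) * cosHalfProd θ φ := by
  rw [qfun, sinHalfProd, cosHalfProd, sub_div, cos_sub]
  ring

lemma sq_div_twenty_le_one_sub_cos_half {x : ℝ} (hx : |x| ≤ 2 * π) :
    x ^ 2 / 20 ≤ 1 - cos (x / 2) := by
  have hcos : cos (x / 2) ≤ 1 - 2 / π ^ 2 * (x / 2) ^ 2 :=
    cos_le_one_sub_mul_cos_sq (by rw [abs_div, abs_two]; linarith)
  have hpi : π ^ 2 ≤ 10 := by nlinarith [pi_lt_d2, pi_pos]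
  calc x ^ 2 / 20 ≤ x ^ 2 / (2 * π ^ 2) := by gcongr; linarith
    _ = 2 / π ^ 2 * (x / 2) ^ 2 := by field_simp
    _ ≤ 1 - cos (x / 2) := by linarith

lemma add_mul_add_mul_le_qfun (hθ : θ ∈ Ioo 0 π) (hφ : φ ∈ Ioo 0 π) (u v : ℝ) :
    (θ - φ) ^ 2 / 20 + (1 - u) * sinHalfProd θ φ + (1 - v) * cosHalfProd θ φ ≤ qfun θ φ u v := by
  have hdist : |θ - φ| ≤ 2 * π :=
    abs_le.2 ⟨by linarith [hθ.1, hφ.2, pi_pos], by linarith [hθ.2, hφ.1, pi_pos]⟩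
  rw [qfun_eq]
  gcongr
  exact sq_div_twenty_le_one_sub_cos_half hdist

lemma sq_div_twenty_le_qfun (hθ : θ ∈ Ioo 0 π) (hφ : φ ∈ Ioo 0 π) (hu : u ≤ 1) (hv : v ≤ 1) :
    (θ - φ) ^ 2 / 20 ≤ qfun θ φ u v := by
  have hA := mul_nonneg (sub_nonneg.2 hu) (sinHalfProd_pos hθ hφ).le
  have hB := mul_nonneg (sub_nonneg.2 hv) (cosHalfProd_pos hθ hφ).le
  linarith [add_mul_add_mul_le_qfun hθ hφ u v]

/-- The partial derivative of `qfun θ φ u v` with respect to `θ`. -/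
noncomputable def qfunDeriv (θ φ u v : ℝ) : ℝ :=
  (v * sin (θ / 2) * cos (φ / 2) - u * cos (θ / 2) * sin (φ / 2)) / 2

lemma hasDerivAt_qfun (θ φ u v : ℝ) :
    HasDerivAt (fun x => qfun x φ u v) (qfunDeriv θ φ u v) θ := by
  have hhalf : HasDerivAt (fun x : ℝ => x / 2) (1 / 2) θ := (hasDerivAt_id θ).div_const 2
  have hsin := (hhalf.sin.const_mul u).mul_const (sin (φ / 2))
  have hcos := (hhalf.cos.const_mul v).mul_const (cos (φ / 2))
  refine ((hsin.const_sub 1).sub hcos).congr_deriv ?_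
  rw [qfunDeriv]
  ring

lemma qfunDeriv_sq_le (θ φ : ℝ) (hu : u ∈ Icc (-1) 1) (hv : v ∈ Icc (-1) 1) :
    qfunDeriv θ φ u v ^ 2 ≤ qfun θ φ u v / 2 := by
  have hu2 : u ^ 2 ≤ 1 := (sq_le_one_iff_abs_le_one u).2 (abs_le.2 hu)
  have hv2 : v ^ 2 ≤ 1 := (sq_le_one_iff_abs_le_one v).2 (abs_le.2 hv)
  set p := u * sin (θ / 2) * sin (φ / 2) + v * cos (θ / 2) * cos (φ / 2) with hp
  have hq : qfun θ φ u v = 1 - p := by rw [qfun, hp]; ring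
  -- `1 - q` and `2 ∂q` are the coordinates of `(u sin (φ/2), v cos (φ/2))` in a rotated frame.
  have hrot : (2 * qfunDeriv θ φ u v) ^ 2 + p ^ 2
      = (u ^ 2 * sin (φ / 2) ^ 2 + v ^ 2 * cos (φ / 2) ^ 2)
        * (sin (θ / 2) ^ 2 + cos (θ / 2) ^ 2) := by
    rw [qfunDeriv, hp]; ring
  have hunit : (2 * qfunDeriv θ φ u v) ^ 2 + p ^ 2 ≤ 1 := by
    rw [hrot, sin_sq_add_cos_sq, mul_one, ← sin_sq_add_cos_sq (φ / 2)]
    exact add_le_add (mul_le_of_le_one_left (sq_nonneg _) hu2)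
      (mul_le_of_le_one_left (sq_nonneg _) hv2)
  rw [hq]
  nlinarith [sq_nonneg (1 - p)]

lemma qfun_nonneg (θ φ : ℝ) (hu : u ∈ Icc (-1) 1) (hv : v ∈ Icc (-1) 1) : 0 ≤ qfun θ φ u v := by
  linarith [qfunDeriv_sq_le θ φ hu hv, sq_nonneg (qfunDeriv θ φ u v)]

lemma qfun_le_two (θ φ : ℝ) (hu : u ∈ Icc (-1) 1) (hv : v ∈ Icc (-1) 1) : qfun θ φ u v ≤ 2 := by
  have hneg : 0 ≤ qfun θ φ (-u) (-v) :=
    qfun_nonneg θ φ (by simpa [and_comm, neg_le] using hu) (by simpa [and_comm, neg_le] using hv)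
  unfold qfun at hneg ⊢
  linarith

lemma qfun_le_two_mul_add (θ z φ : ℝ) (hu : u ∈ Icc (-1) 1) (hv : v ∈ Icc (-1) 1) :
    qfun θ φ u v ≤ 2 * qfun z φ u v + (θ - z) ^ 2 / 4 := by
  set x := (θ - z) / 2 with hx
  set q := qfun z φ u v with hq
  set q' := qfunDeriv z φ u v with hq'
  have haddition : qfun θ φ u v = 1 - cos x + cos x * q + 2 * sin x * q' := by
    have hθ : θ / 2 = z / 2 + x := by rw [hx]; ring
    rw [qfun, hθ, sin_add, cos_add, hq, hq', qfun, qfunDeriv]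
    ring
  have hderiv : q' ^ 2 ≤ q / 2 := qfunDeriv_sq_le z φ hu hv
  have hsin : sin x ^ 2 ≤ x ^ 2 := sq_le_sq.2 abs_sin_le_abs
  have hcross : 2 * sin x * q' ≤ sin x ^ 2 / 2 + 2 * q' ^ 2 := by
    nlinarith [sq_nonneg (sin x - 2 * q')]
  have hcosq : cos x * q ≤ q := mul_le_of_le_one_left (qfun_nonneg z φ hu hv) (cos_le_one x)
  have hxsq : x ^ 2 = (θ - z) ^ 2 / 4 := by rw [hx]; ring
  rw [haddition]
  linarith [one_sub_sq_div_two_le_cos (x := x)]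

lemma qfun_le_seven_mul_qfun (hz : z ∈ Ioo 0 π) (hφ : φ ∈ Ioo 0 π)
    (hu : u ∈ Icc (-1) 1) (hv : v ∈ Icc (-1) 1) (hθz : 2 * |θ - z| ≤ |θ - φ|) :
    qfun θ φ u v ≤ 7 * qfun z φ u v := by
  have hdist : |θ - z| ≤ |z - φ| := by linarith [abs_sub_le θ z φ]
  have hsq : (θ - z) ^ 2 ≤ (z - φ) ^ 2 := sq_le_sq.2 hdist
  linarith [qfun_le_two_mul_add θ z φ hu hv, sq_div_twenty_le_qfun hz hφ hu.2 hv.2]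

lemma qfun_le_four_mul_qfun (hθ : θ ∈ Ioo 0 π) (hφ : φ ∈ Ioo 0 π)
    (hu : u ∈ Icc (-1) 1) (hv : v ∈ Icc (-1) 1) (hθz : 2 * |θ - z| ≤ |θ - φ|) :
    qfun z φ u v ≤ 4 * qfun θ φ u v := by
  have hsq : (2 * (z - θ)) ^ 2 ≤ (θ - φ) ^ 2 :=
    sq_le_sq.2 (by rwa [abs_mul, abs_two, abs_sub_comm])
  linarith [qfun_le_two_mul_add z θ φ hu hv, sq_div_twenty_le_qfun hθ hφ hu.2 hv.2,
    qfun_nonneg θ φ hu hv]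

end Qfun

section PsiBounds

variable {α β t s : ℝ}

lemma cosh_sub_one_add_pos (ht : t ≠ 0) (hs : 0 ≤ s) : 0 < cosh (t / 2) - 1 + s := by
  have := one_lt_cosh.2 (div_ne_zero ht two_ne_zero)
  linarith

lemma sinh_mul_sqrt_le (x : ℝ) (hs : 0 ≤ s) (hs2 : s ≤ 2) :
    sinh x * √s ≤ 2 * (cosh x - 1 + s) := by
  have hd : 0 ≤ cosh x - 1 := sub_nonneg.2 (one_le_cosh x)
  refine le_of_sq_le_sq ?_ (by positivity)
  rw [mul_pow, sq_sqrt hs, sinh_sq]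
  nlinarith [mul_nonneg hd hs, mul_nonneg (sq_nonneg (cosh x - 1)) (sub_nonneg.2 hs2)]

lemma Psi_nonneg (ht : 0 ≤ t) (hs : 0 ≤ s) : 0 ≤ Psi α β t s := by
  have hP : 0 ≤ cosh (t / 2) - 1 + s := add_nonneg (sub_nonneg.2 (one_le_cosh _)) hs
  have hsinh : 0 ≤ sinh (t / 2) := sinh_nonneg_iff.2 (by positivity)
  exact div_nonneg hsinh (rpow_nonneg hP _)

lemma Psi_le (t : ℝ) (hs : 0 < s) (hs2 : s ≤ 2) (h : -1 ≤ α + β) :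
    Psi α β t s ≤ 2 * √s * s ^ (-(α + β + 2)) := by
  set P := cosh (t / 2) - 1 + s with hP
  have hsP : s ≤ P := by linarith [one_le_cosh (t / 2)]
  have hP0 : 0 < P := hs.trans_le hsP
  have hsinh : sinh (t / 2) ≤ 2 * P / √s :=
    (le_div_iff₀ (sqrt_pos.2 hs)).2 (sinh_mul_sqrt_le _ hs.le hs2)
  calc Psi α β t s = sinh (t / 2) * P ^ (-(α + β + 2)) := by
        rw [Psi, ← hP, rpow_neg hP0.le, div_eq_mul_inv]
    _ ≤ 2 * P / √s * P ^ (-(α + β + 2)) := by gcongr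
    _ = 2 / √s * P ^ (-(α + β + 1)) := by
        rw [show -(α + β + 1) = 1 + -(α + β + 2) by ring, rpow_add hP0, rpow_one]; ring
    _ ≤ 2 / √s * s ^ (-(α + β + 1)) := by
        gcongr 2 / √s * ?_
        exact rpow_le_rpow_of_nonpos hs hsP (by linarith)
    _ = 2 * (s / √s) * s ^ (-(α + β + 2)) := by
        rw [show -(α + β + 1) = 1 + -(α + β + 2) by ring, rpow_add hs, rpow_one]; ring
    _ = 2 * √s * s ^ (-(α + β + 2)) := by rw [div_sqrt]

lemma sqrt_mul_Psi_add_one_le (t : ℝ) (hs : 0 < s) (hs2 : s ≤ 2) (h : -1 ≤ α + β) :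
    √s * Psi (α + 1) β t s ≤ 2 * s ^ (-(α + β + 2)) := by
  calc √s * Psi (α + 1) β t s ≤ √s * (2 * √s * s ^ (-(α + 1 + β + 2))) := by
        gcongr; exact Psi_le t hs hs2 (by linarith)
    _ = 2 * (√s * √s * s ^ (-(α + 1 + β + 2))) := by ring
    _ = 2 * s ^ (-(α + β + 2)) := by
        rw [mul_self_sqrt hs.le, ← rpow_one_add' hs.le (by linarith)]; ring_nf

lemma hasDerivAt_Psi (ht : t ≠ 0) (hs : 0 ≤ s) :
    HasDerivAt (Psi α β t) (-(α + β + 2) * Psi (α + 1) β t s) s := by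
  have hP := cosh_sub_one_add_pos ht hs
  have hbase : HasDerivAt (fun x => cosh (t / 2) - 1 + x) 1 s := (hasDerivAt_id s).const_add _
  have hpow := hbase.rpow_const (p := α + β + 2) (Or.inl hP.ne')
  refine ((hpow.fun_inv (rpow_pos_of_pos hP _).ne').const_mul (sinh (t / 2))).congr_deriv ?_
  rw [Psi, show α + 1 + β + 2 = α + β + 2 + 1 by ring, rpow_add_one hP.ne', rpow_sub_one hP.ne']
  field_simp

lemma continuousOn_Psi (ht : t ≠ 0) : ContinuousOn (Psi α β t) (Ici 0) :=
  fun _ hs => (hasDerivAt_Psi ht hs).continuousAt.continuousWithinAt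

end PsiBounds

section SymmetrizedIntegrand

/-- The integrand of `Htilde α β t θ φ` against `PiMeasure (α + 1)` and `PiMeasure (β + 1)`, up to
a constant and with the shift of the parameters undone:
`(1/4) sin θ sin φ Ψ^{α,β}(t, q(θ,φ,u,v))`. -/
noncomputable def symPsi (α β t θ φ u v : ℝ) : ℝ :=
  1 / 4 * sin θ * sin φ * Psi α β t (qfun θ φ u v)

/-- The partial derivative of `symPsi α β t θ φ u v` with respect to `θ`. -/
noncomputable def symPsiDeriv (α β t θ φ u v : ℝ) : ℝ :=
  1 / 4 * cos θ * sin φ * Psi α β t (qfun θ φ u v) +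
    1 / 4 * sin θ * sin φ *
      (-(α + β + 2) * Psi (α + 1) β t (qfun θ φ u v) * qfunDeriv θ φ u v)

/-- The product `sinHalfProd θ φ * cosHalfProd θ φ` with `sin (θ/2)` and `cos (θ/2)` both enlarged
by `√s`. For `s = q(θ,φ,u,v)` it is, up to a power of `q`, the size of the `θ`-derivative of
`symPsi`. -/
noncomputable def thickenedProd (θ φ s : ℝ) : ℝ :=
  (sinHalfProd θ φ + √s * sin (φ / 2)) * (cosHalfProd θ φ + √s * cos (φ / 2))

variable {α β t θ θ' φ z u v : ℝ}

lemma hasDerivAt_symPsi (ht : t ≠ 0) (hu : u ∈ Icc (-1) 1) (hv : v ∈ Icc (-1) 1) :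
    HasDerivAt (fun x => symPsi α β t x φ u v) (symPsiDeriv α β t θ φ u v) θ := by
  have hPsi := (hasDerivAt_Psi (α := α) (β := β) ht (qfun_nonneg θ φ hu hv)).comp θ
    (hasDerivAt_qfun θ φ u v)
  exact (((hasDerivAt_sin θ).const_mul (1 / 4)).mul_const (sin φ)).mul hPsi

lemma sinHalfProd_mul_cosHalfProd_add_le_thickenedProd (hφ : φ ∈ Ioo 0 π) (s : ℝ) :
    sinHalfProd θ φ * cosHalfProd θ φ
        + √s * (sin (φ / 2) * cosHalfProd θ φ + cos (φ / 2) * sinHalfProd θ φ)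
      ≤ thickenedProd θ φ s := by
  have hs := sin_half_pos hφ
  have hc := cos_half_pos hφ
  have hextra : 0 ≤ √s * sin (φ / 2) * (√s * cos (φ / 2)) := by positivity
  rw [thickenedProd]
  linarith

lemma thickenedProd_nonneg (hθ : θ ∈ Ioo 0 π) (hφ : φ ∈ Ioo 0 π) (s : ℝ) :
    0 ≤ thickenedProd θ φ s := by
  have := sinHalfProd_pos hθ hφ
  have := cosHalfProd_pos hθ hφ
  have := sin_half_pos hφ
  have := cos_half_pos hφ
  rw [thickenedProd]
  positivity

lemma abs_cos_mul_sin_le (hθ : θ ∈ Ioo 0 π) (hφ : φ ∈ Ioo 0 π) :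
    |1 / 4 * cos θ * sin φ|
      ≤ (sin (φ / 2) * cosHalfProd θ φ + cos (φ / 2) * sinHalfProd θ φ) / 2 := by
  have hθs := sin_half_pos hθ
  have hθc := cos_half_pos hθ
  have hφs := sin_half_pos hφ
  have hφc := cos_half_pos hφ
  have hcos : cos θ = cos (θ / 2) ^ 2 - sin (θ / 2) ^ 2 := by rw [← cos_two_mul']; ring_nf
  have hsin : sin φ = 2 * sin (φ / 2) * cos (φ / 2) := by rw [← sin_two_mul]; ring_nf
  have heq : 1 / 4 * cos θ * sin φ
      = (cos (θ / 2) * (sin (φ / 2) * cosHalfProd θ φ)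
        - sin (θ / 2) * (cos (φ / 2) * sinHalfProd θ φ)) / 2 := by
    rw [hcos, hsin, cosHalfProd, sinHalfProd]; ring
  have hA : 0 ≤ cos (φ / 2) * sinHalfProd θ φ := by have := sinHalfProd_pos hθ hφ; positivity
  have hB : 0 ≤ sin (φ / 2) * cosHalfProd θ φ := by have := cosHalfProd_pos hθ hφ; positivity
  have hsA := mul_le_of_le_one_left hA (sin_le_one (θ / 2))
  have hcB := mul_le_of_le_one_left hB (cos_le_one (θ / 2))
  have hsA0 := mul_nonneg hθs.le hA
  have hcB0 := mul_nonneg hθc.le hB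
  rw [heq, abs_le]
  constructor <;> linarith

lemma abs_symPsiDeriv_le (h : -1 ≤ α + β) (ht : 0 < t) (hθ : θ ∈ Ioo 0 π) (hφ : φ ∈ Ioo 0 π)
    (hu : u ∈ Icc (-1) 1) (hv : v ∈ Icc (-1) 1) (hq : 0 < qfun θ φ u v) :
    |symPsiDeriv α β t θ φ u v| ≤
      2 * (α + β + 2) * qfun θ φ u v ^ (-(α + β + 2)) * thickenedProd θ φ (qfun θ φ u v) := by
  have hE := sinHalfProd_mul_cosHalfProd_add_le_thickenedProd (θ := θ) hφ (qfun θ φ u v)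
  have hPsi : Psi α β t (qfun θ φ u v) ≤ _ := Psi_le t hq (qfun_le_two θ φ hu hv) h
  have hPsi' : √(qfun θ φ u v) * Psi (α + 1) β t (qfun θ φ u v) ≤ _ :=
    sqrt_mul_Psi_add_one_le t hq (qfun_le_two θ φ hu hv) h
  have hq' : |qfunDeriv θ φ u v| ≤ √(qfun θ φ u v) :=
    abs_le_sqrt ((qfunDeriv_sq_le θ φ hu hv).trans (half_le_self hq.le))
  have hA := sinHalfProd_pos hθ hφ
  have hB := cosHalfProd_pos hθ hφ
  have hs := sin_half_pos hφ
  have hc := cos_half_pos hφ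
  have hPsi0 : 0 ≤ Psi α β t (qfun θ φ u v) := Psi_nonneg ht.le hq.le
  have hPsi0' : 0 ≤ Psi (α + 1) β t (qfun θ φ u v) := Psi_nonneg ht.le hq.le
  have hcs := abs_cos_mul_sin_le hθ hφ
  rw [symPsiDeriv, ← sinHalfProd_mul_cosHalfProd]
  set q := qfun θ φ u v
  set A := sinHalfProd θ φ
  set B := cosHalfProd θ φ
  set D := sin (φ / 2) * B + cos (φ / 2) * A
  have hN1 : 1 ≤ α + β + 2 := by linarith
  set N := α + β + 2
  calc |1 / 4 * cos θ * sin φ * Psi α β t q + A * B * (-N * Psi (α + 1) β t q * qfunDeriv θ φ u v)|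
      ≤ |1 / 4 * cos θ * sin φ| * Psi α β t q
        + A * B * (N * Psi (α + 1) β t q * |qfunDeriv θ φ u v|) := by
        refine (abs_add_le _ _).trans_eq ?_
        simp only [abs_mul, abs_neg, abs_of_nonneg hPsi0, abs_of_nonneg hPsi0', abs_of_pos hA,
          abs_of_pos hB, abs_of_pos (zero_lt_one.trans_le hN1)]
    _ ≤ D / 2 * (2 * √q * q ^ (-N)) + A * B * (N * Psi (α + 1) β t q * √q) := by gcongr
    _ = D / 2 * (2 * √q * q ^ (-N)) + A * B * N * (√q * Psi (α + 1) β t q) := by ring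
    _ ≤ D / 2 * (2 * √q * q ^ (-N)) + A * B * N * (2 * q ^ (-N)) := by gcongr
    _ = q ^ (-N) * (1 * (√q * D) + 2 * N * (A * B)) := by ring
    _ ≤ q ^ (-N) * (2 * N * (√q * D) + 2 * N * (A * B)) := by gcongr; linarith
    _ = 2 * N * q ^ (-N) * (A * B + √q * D) := by ring
    _ ≤ 2 * N * q ^ (-N) * thickenedProd θ φ q := by gcongr

lemma thickenedProd_qfun_le (hθ : θ ∈ Ioo 0 π) (hφ : φ ∈ Ioo 0 π) (hz : z ∈ Ioo 0 π)
    (hu : u ∈ Icc (-1) 1) (hv : v ∈ Icc (-1) 1) (hθz : 2 * |θ - z| ≤ |θ - φ|) :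
    thickenedProd z φ (qfun z φ u v) ≤ 16 * thickenedProd θ φ (qfun θ φ u v) := by
  have hq0 : 0 ≤ qfun θ φ u v := qfun_nonneg θ φ hu hv
  have hsqrt : √(qfun z φ u v) ≤ 2 * √(qfun θ φ u v) := by
    refine (sqrt_le_sqrt (qfun_le_four_mul_qfun hθ hφ hu hv hθz)).trans_eq ?_
    rw [show (4 : ℝ) = 2 ^ 2 by norm_num, sqrt_mul (by norm_num), sqrt_sq zero_le_two]
  have hdist : |z - θ| / 2 ≤ 2 * √(qfun θ φ u v) := by
    have hsq : (θ - φ) ^ 2 ≤ (8 * √(qfun θ φ u v)) ^ 2 := by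
      rw [mul_pow, sq_sqrt hq0]
      linarith [sq_div_twenty_le_qfun hθ hφ hu.2 hv.2]
    have habs := abs_le_of_sq_le_sq hsq (by positivity)
    rw [abs_sub_comm]
    linarith
  have hsin : sin (z / 2) ≤ sin (θ / 2) + 2 * √(qfun θ φ u v) := by
    linarith [le_of_abs_le (abs_sin_half_sub_sin_half_le z θ)]
  have hcos : cos (z / 2) ≤ cos (θ / 2) + 2 * √(qfun θ φ u v) := by
    linarith [le_of_abs_le (abs_cos_half_sub_cos_half_le z θ)]
  have hφs := sin_half_pos hφ
  have hφc := cos_half_pos hφ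
  have hzc := cos_half_pos hz
  have hθs := sin_half_pos hθ
  have hθc := cos_half_pos hθ
  calc thickenedProd z φ (qfun z φ u v)
      = (sin (z / 2) + √(qfun z φ u v)) * sin (φ / 2)
        * ((cos (z / 2) + √(qfun z φ u v)) * cos (φ / 2)) := by
        rw [thickenedProd, sinHalfProd, cosHalfProd]; ring
    _ ≤ (4 * (sin (θ / 2) + √(qfun θ φ u v))) * sin (φ / 2)
        * ((4 * (cos (θ / 2) + √(qfun θ φ u v))) * cos (φ / 2)) := by
        gcongr <;> linarith
    _ = 16 * thickenedProd θ φ (qfun θ φ u v) := by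
        rw [thickenedProd, sinHalfProd, cosHalfProd]; ring

lemma abs_symPsi_sub_le (h : -1 ≤ α + β) (ht : 0 < t) (hθ : θ ∈ Ioo 0 π) (hθ' : θ' ∈ Ioo 0 π)
    (hφ : φ ∈ Ioo 0 π) (hu : u ∈ Icc (-1) 1) (hv : v ∈ Icc (-1) 1)
    (hq : 0 < qfun θ φ u v) (hθθ' : 2 * |θ - θ'| ≤ |θ - φ|) :
    |symPsi α β t θ φ u v - symPsi α β t θ' φ u v| ≤
      32 * (α + β + 2) * 7 ^ (α + β + 2) * |θ - θ'|
        * (qfun θ φ u v ^ (-(α + β + 2)) * thickenedProd θ φ (qfun θ φ u v)) := by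
  set q := qfun θ φ u v
  have hN0 : 0 ≤ α + β + 2 := by linarith
  set N := α + β + 2
  have hderiv : ∀ z ∈ uIcc θ θ', ‖symPsiDeriv α β t z φ u v‖ ≤
      2 * N * (q / 7) ^ (-N) * (16 * thickenedProd θ φ q) := by
    intro z hz
    have hz0 : z ∈ Ioo 0 π := ordConnected_Ioo.uIcc_subset hθ hθ' hz
    have hθz : 2 * |θ - z| ≤ |θ - φ| := by
      have := abs_sub_left_of_mem_uIcc hz
      rw [abs_sub_comm z, abs_sub_comm θ'] at this
      linarith
    have hqz : q / 7 ≤ qfun z φ u v := by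
      linarith [qfun_le_seven_mul_qfun hz0 hφ hu hv hθz]
    have hqz0 : 0 < qfun z φ u v := (by positivity : 0 < q / 7).trans_le hqz
    have hpow : qfun z φ u v ^ (-N) ≤ (q / 7) ^ (-N) :=
      rpow_le_rpow_of_nonpos (by positivity) hqz (by linarith)
    exact (abs_symPsiDeriv_le h ht hz0 hφ hu hv hqz0).trans
      (mul_le_mul (by gcongr) (thickenedProd_qfun_le hθ hφ hz0 hu hv hθz)
        (thickenedProd_nonneg hz0 hφ _) (by positivity))
  have hmvt := (convex_uIcc θ θ').norm_image_sub_le_of_norm_hasDerivWithin_le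
    (fun z _ => (hasDerivAt_symPsi ht.ne' hu hv).hasDerivWithinAt) hderiv
    right_mem_uIcc left_mem_uIcc
  refine hmvt.trans_eq ?_
  rw [div_rpow hq.le (by norm_num), rpow_neg (by norm_num : (0 : ℝ) ≤ 7), norm_eq_abs]
  field_simp
  ring

lemma continuousOn_symPsi (α β θ φ : ℝ) (ht : t ≠ 0) :
    ContinuousOn (fun p : ℝ × ℝ => symPsi α β t θ φ p.1 p.2) (Icc (-1) 1 ×ˢ Icc (-1) 1) := by
  refine continuousOn_const.mul ((continuousOn_Psi ht).comp ?_ ?_)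
  · unfold qfun
    fun_prop
  · exact fun p hp => qfun_nonneg θ φ hp.1 hp.2

end SymmetrizedIntegrand

section EdgeIntegrals

/-- The factor `B / Q + x^(-1/2)` of `edgeKernel`, where `x = 1 - v` is the distance of the
integration variable `v` to the endpoint `1`. -/
noncomputable def edgeFactor (B Q x : ℝ) : ℝ := B / Q + x ^ (-(1 / 2) : ℝ)

/-- The majorant, up to a constant, of the weighted increment of the integrand of the kernel; `Q`
stands for the value `q(θ,φ,u,v)` or a lower bound of it. -/
noncomputable def edgeKernel (A B Q u v : ℝ) : ℝ :=
  edgeFactor A Q (1 - u) * edgeFactor B Q (1 - v) / Q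

variable {A B M R : ℝ} {f : ℝ → ℝ}

lemma edgeFactor_nonneg {Q x : ℝ} (hB : 0 ≤ B) (hQ : 0 ≤ Q) (hx : 0 ≤ x) :
    0 ≤ edgeFactor B Q x := by
  rw [edgeFactor]; positivity

lemma edgeFactor_anti {Q Q' : ℝ} (x : ℝ) (hB : 0 ≤ B) (hQ : 0 < Q) (h : Q ≤ Q') :
    edgeFactor B Q' x ≤ edgeFactor B Q x := by
  rw [edgeFactor, edgeFactor]; gcongr

lemma edgeKernel_anti {Q Q' u v : ℝ} (hA : 0 ≤ A) (hB : 0 ≤ B) (hQ : 0 < Q) (h : Q ≤ Q')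
    (hu : u ≤ 1) (hv : v ≤ 1) : edgeKernel A B Q' u v ≤ edgeKernel A B Q u v := by
  have hA_anti := edgeFactor_anti (1 - u) hA hQ h
  have hB_anti := edgeFactor_anti (1 - v) hB hQ h
  have hA_nonneg := edgeFactor_nonneg hA hQ.le (sub_nonneg.2 hu)
  have hB_nonneg := edgeFactor_nonneg hB (hQ.le.trans h) (sub_nonneg.2 hv)
  rw [edgeKernel, edgeKernel]
  gcongr
  exact mul_nonneg hA_nonneg (hB_nonneg.trans hB_anti)

lemma integrableOn_div_sq_and_integral_le (hR : 0 < R) (hB : 0 ≤ B) :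
    IntegrableOn (fun v : ℝ => B / (R + (1 - v) * B) ^ 2) (Ioo (-1) 1) ∧
      ∫ v in Ioo (-1 : ℝ) 1, B / (R + (1 - v) * B) ^ 2 ≤ 1 / R := by
  have hpos : ∀ v ∈ uIcc (-1 : ℝ) 1, 0 < R + (1 - v) * B := by
    intro v hv
    rw [uIcc_of_le (by norm_num)] at hv
    linarith [mul_nonneg (sub_nonneg.2 hv.2) hB]
  have hint : IntervalIntegrable (fun v : ℝ => B / (R + (1 - v) * B) ^ 2) volume (-1) 1 :=
    (continuousOn_const.div (by fun_prop) fun v hv =>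
      (pow_pos (hpos v hv) 2).ne').intervalIntegrable
  have hderiv : ∀ v ∈ uIcc (-1 : ℝ) 1, HasDerivAt (fun v : ℝ => (R + (1 - v) * B)⁻¹)
      (B / (R + (1 - v) * B) ^ 2) v := by
    intro v hv
    have hlin : HasDerivAt (fun v : ℝ => R + (1 - v) * B) (-1 * B) v :=
      (((hasDerivAt_id v).const_sub 1).mul_const B).const_add R
    exact (hlin.fun_inv (hpos v hv).ne').congr_deriv (by ring)
  refine ⟨(intervalIntegrable_iff_integrableOn_Ioo_of_le (by norm_num)).1 hint, ?_⟩
  rw [← integral_Ioc_eq_integral_Ioo, ← intervalIntegral.integral_of_le (by norm_num),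
    intervalIntegral.integral_eq_sub_of_hasDerivAt hderiv hint]
  have hend : 0 ≤ (R + (1 - -1) * B)⁻¹ := by positivity
  simp only [sub_self, zero_mul, add_zero, one_div]
  linarith

lemma integrableOn_one_sub_rpow_neg_half_and_integral_le :
    IntegrableOn (fun v : ℝ => (1 - v) ^ (-(1 / 2) : ℝ)) (Ioo (-1) 1) ∧
      ∫ v in Ioo (-1 : ℝ) 1, (1 - v) ^ (-(1 / 2) : ℝ) ≤ 3 := by
  have hint : IntervalIntegrable (fun v : ℝ => (1 - v) ^ (-(1 / 2) : ℝ)) volume (-1) 1 := by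
    have := (intervalIntegral.intervalIntegrable_rpow' (a := 2) (b := 0) (r := -(1 / 2))
      (by norm_num)).comp_sub_left 1
    norm_num at this ⊢
    exact this
  refine ⟨(intervalIntegrable_iff_integrableOn_Ioo_of_le (by norm_num)).1 hint, ?_⟩
  rw [← integral_Ioc_eq_integral_Ioo, ← intervalIntegral.integral_of_le (by norm_num),
    intervalIntegral.integral_comp_sub_left (fun x => x ^ (-(1 / 2) : ℝ)) 1,
    integral_rpow (Or.inl (by norm_num))]
  norm_num
  rw [← sqrt_eq_rpow]
  nlinarith [sq_sqrt (zero_le_two (α := ℝ)), sqrt_nonneg (2 : ℝ)]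

lemma abs_setIntegral_le_of_abs_le_edgeFactor (hR : 0 < R) (hB : 0 ≤ B) (hM : 0 ≤ M)
    (hf : ∀ v ∈ Ioo (-1 : ℝ) 1, |f v| ≤
      M * (edgeFactor B (R + (1 - v) * B) (1 - v) / (R + (1 - v) * B))) :
    |∫ v in Ioo (-1 : ℝ) 1, f v| ≤ 4 * M / R := by
  obtain ⟨hint₁, hle₁⟩ := integrableOn_div_sq_and_integral_le hR hB
  obtain ⟨hint₂, hle₂⟩ := integrableOn_one_sub_rpow_neg_half_and_integral_le
  have hbound : ∀ v ∈ Ioo (-1 : ℝ) 1, ‖f v‖ ≤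
      M * (B / (R + (1 - v) * B) ^ 2) + M / R * (1 - v) ^ (-(1 / 2) : ℝ) := by
    intro v hv
    have hQ : R ≤ R + (1 - v) * B := le_add_of_nonneg_right (mul_nonneg (by linarith [hv.2]) hB)
    have hX : 0 ≤ (1 - v) ^ (-(1 / 2) : ℝ) := rpow_nonneg (by linarith [hv.2]) _
    calc ‖f v‖ ≤ M * (edgeFactor B (R + (1 - v) * B) (1 - v) / (R + (1 - v) * B)) := hf v hv
      _ = M * (B / (R + (1 - v) * B) ^ 2)
          + M * ((1 - v) ^ (-(1 / 2) : ℝ) / (R + (1 - v) * B)) := by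
          rw [edgeFactor, add_div, div_div, ← sq, mul_add]
      _ ≤ M * (B / (R + (1 - v) * B) ^ 2) + M * ((1 - v) ^ (-(1 / 2) : ℝ) / R) := by gcongr
      _ = _ := by ring
  calc |∫ v in Ioo (-1 : ℝ) 1, f v|
      ≤ ∫ v in Ioo (-1 : ℝ) 1,
          (M * (B / (R + (1 - v) * B) ^ 2) + M / R * (1 - v) ^ (-(1 / 2) : ℝ)) :=
        norm_integral_le_of_norm_le ((hint₁.const_mul M).add (hint₂.const_mul (M / R)))
          (ae_restrict_of_forall_mem measurableSet_Ioo hbound)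
    _ = M * (∫ v in Ioo (-1 : ℝ) 1, B / (R + (1 - v) * B) ^ 2)
        + M / R * ∫ v in Ioo (-1 : ℝ) 1, (1 - v) ^ (-(1 / 2) : ℝ) := by
        rw [integral_add (hint₁.const_mul M) (hint₂.const_mul (M / R)), integral_const_mul,
          integral_const_mul]
    _ ≤ M * (1 / R) + M / R * 3 := by gcongr
    _ = 4 * M / R := by ring

lemma abs_setIntegral_setIntegral_le_of_abs_le_edgeKernel {F : ℝ → ℝ → ℝ} (hR : 0 < R)
    (hA : 0 ≤ A) (hB : 0 ≤ B) (hM : 0 ≤ M)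
    (hF : ∀ u ∈ Ioo (-1 : ℝ) 1, ∀ v ∈ Ioo (-1 : ℝ) 1, |F u v| ≤
      M * edgeKernel A B (R + (1 - u) * A + (1 - v) * B) u v) :
    |∫ u in Ioo (-1 : ℝ) 1, ∫ v in Ioo (-1 : ℝ) 1, F u v| ≤ 16 * M / R := by
  have hinner : ∀ u ∈ Ioo (-1 : ℝ) 1, |∫ v in Ioo (-1 : ℝ) 1, F u v| ≤
      4 * M * (edgeFactor A (R + (1 - u) * A) (1 - u) / (R + (1 - u) * A)) := by
    intro u hu
    have hu0 : 0 ≤ 1 - u := by linarith [hu.2]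
    have hRu : 0 < R + (1 - u) * A := by positivity
    have hAu : 0 ≤ edgeFactor A (R + (1 - u) * A) (1 - u) := edgeFactor_nonneg hA hRu.le hu0
    refine (abs_setIntegral_le_of_abs_le_edgeFactor hRu hB (mul_nonneg hM hAu) ?_).trans_eq
      (by ring)
    intro v hv
    have hv0 : 0 ≤ 1 - v := by linarith [hv.2]
    have hQ : R + (1 - u) * A ≤ R + (1 - u) * A + (1 - v) * B :=
      le_add_of_nonneg_right (mul_nonneg hv0 hB)
    have hanti := edgeFactor_anti (1 - u) hA hRu hQ
    have hBv := edgeFactor_nonneg hB (hRu.le.trans hQ) hv0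
    refine (hF u hu v hv).trans ?_
    rw [edgeKernel, mul_div_assoc, mul_assoc M]
    gcongr
  refine (abs_setIntegral_le_of_abs_le_edgeFactor hR hA (by positivity) hinner).trans_eq ?_
  ring

end EdgeIntegrals

section Weights

variable {a b s c A B R q u v : ℝ}

lemma one_sub_sq_nonneg (hu : u ∈ Ioo (-1) 1) : 0 ≤ 1 - u ^ 2 :=
  sub_nonneg.2 ((sq_le_one_iff_abs_le_one u).2 (abs_le.2 ⟨hu.1.le, hu.2.le⟩))

lemma one_sub_sq_rpow_mul_rpow_le (ha : 0 ≤ a) (hu : u ∈ Ioo (-1) 1) (hA : 0 ≤ A) (hR : 0 ≤ R)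
    (hq : R + (1 - u) * A ≤ q) : (1 - u ^ 2) ^ a * (A + R) ^ a ≤ (4 * q) ^ a := by
  have hu0 : 0 < 1 - u := by linarith [hu.2]
  have hu2 := one_sub_sq_nonneg hu
  rw [← mul_rpow hu2 (by positivity)]
  refine rpow_le_rpow (by positivity) ?_ ha
  nlinarith [mul_nonneg hA hu0.le, mul_nonneg hR (sq_nonneg u), hu.2]

lemma add_sqrt_mul_le_edgeFactor (hu : u ∈ Ioo (-1) 1) (hA : 0 ≤ A) (hR : 0 < R)
    (hs : s ^ 2 ≤ 5 * (A + R)) (hq : R + (1 - u) * A ≤ q) :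
    A + √q * s ≤ 4 * q * edgeFactor A q (1 - u) := by
  have hu0 : 0 < 1 - u := by linarith [hu.2]
  have hu1 : 0 ≤ 1 + u := by linarith [hu.1]
  have hq0 : 0 < q := lt_of_lt_of_le (by positivity) hq
  have hsqrt : s * √(1 - u) ≤ 4 * √q := by
    refine abs_le_of_sq_le_sq' ?_ (by positivity) |>.2
    rw [mul_pow, mul_pow, sq_sqrt hu0.le, sq_sqrt hq0.le]
    nlinarith [mul_le_mul_of_nonneg_right hs hu0.le, mul_nonneg hR.le hu1]
  have hrpow : (1 - u) ^ (-(1 / 2) : ℝ) = (√(1 - u))⁻¹ := by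
    rw [rpow_neg hu0.le, ← sqrt_eq_rpow]
  calc A + √q * s ≤ 4 * A + √q * (4 * √q * (√(1 - u))⁻¹) := by
        gcongr
        · linarith
        · rwa [← div_eq_mul_inv, le_div_iff₀ (sqrt_pos.2 hu0)]
    _ = 4 * A + 4 * (√q * √q) * (√(1 - u))⁻¹ := by ring
    _ = 4 * q * edgeFactor A q (1 - u) := by
        rw [mul_self_sqrt hq0.le, edgeFactor, hrpow]
        field_simp

lemma weight_mul_add_sqrt_mul_le (ha : 0 ≤ a) (hu : u ∈ Ioo (-1) 1) (hA : 0 ≤ A) (hR : 0 < R)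
    (hs0 : 0 ≤ s) (hs : s ^ 2 ≤ 5 * (A + R)) (hq : R + (1 - u) * A ≤ q) :
    (1 - u ^ 2) ^ a * (A + √q * s) ≤
      (4 * q) ^ (a + 1) / (A + R) ^ a * edgeFactor A q (1 - u) := by
  have hu0 : 0 < 1 - u := by linarith [hu.2]
  have hq0 : 0 < q := lt_of_lt_of_le (by positivity) hq
  have hAR : 0 < (A + R) ^ a := rpow_pos_of_pos (by positivity) a
  calc (1 - u ^ 2) ^ a * (A + √q * s)
      ≤ (4 * q) ^ a / (A + R) ^ a * (4 * q * edgeFactor A q (1 - u)) := by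
        refine mul_le_mul ?_ (add_sqrt_mul_le_edgeFactor hu hA hR hs hq) (by positivity)
          (by positivity)
        rw [le_div_iff₀ hAR]
        exact one_sub_sq_rpow_mul_rpow_le ha hu hA hR.le hq
    _ = (4 * q) ^ (a + 1) / (A + R) ^ a * edgeFactor A q (1 - u) := by
        rw [rpow_add_one (by positivity)]
        ring

lemma weight_mul_weight_mul_le (ha : 0 ≤ a) (hb : 0 ≤ b) (hu : u ∈ Ioo (-1) 1)
    (hv : v ∈ Ioo (-1) 1) (hA : 0 ≤ A) (hB : 0 ≤ B) (hR : 0 < R) (hs0 : 0 ≤ s) (hc0 : 0 ≤ c)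
    (hs : s ^ 2 ≤ 5 * (A + R)) (hc : c ^ 2 ≤ 5 * (B + R))
    (hq : R + (1 - u) * A + (1 - v) * B ≤ q) :
    (1 - u ^ 2) ^ a * (1 - v ^ 2) ^ b
        * (q ^ (-(a + b + 3)) * ((A + √q * s) * (B + √q * c))) ≤
      4 ^ (a + b + 2) / ((A + R) ^ a * (B + R) ^ b) * edgeKernel A B q u v := by
  have hu0 : 0 ≤ 1 - u := by linarith [hu.2]
  have hv0 : 0 ≤ 1 - v := by linarith [hv.2]
  have hv2 := one_sub_sq_nonneg hv
  have huA := mul_nonneg hu0 hA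
  have hvB := mul_nonneg hv0 hB
  have hq0 : 0 < q := by linarith
  have hA_nonneg := edgeFactor_nonneg hA hq0.le hu0
  have hA_le := weight_mul_add_sqrt_mul_le ha hu hA hR hs0 hs (by linarith : _ ≤ q)
  have hB_le := weight_mul_add_sqrt_mul_le hb hv hB hR hc0 hc (by linarith : _ ≤ q)
  calc (1 - u ^ 2) ^ a * (1 - v ^ 2) ^ b * (q ^ (-(a + b + 3)) * ((A + √q * s) * (B + √q * c)))
      = q ^ (-(a + b + 3)) * (((1 - u ^ 2) ^ a * (A + √q * s))
        * ((1 - v ^ 2) ^ b * (B + √q * c))) := by ring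
    _ ≤ q ^ (-(a + b + 3)) * (((4 * q) ^ (a + 1) / (A + R) ^ a * edgeFactor A q (1 - u))
        * ((4 * q) ^ (b + 1) / (B + R) ^ b * edgeFactor B q (1 - v))) := by
        refine mul_le_mul_of_nonneg_left (mul_le_mul hA_le hB_le ?_ ?_) ?_ <;> positivity
    _ = q ^ (-(a + b + 3)) * (4 * q) ^ (a + b + 2) / ((A + R) ^ a * (B + R) ^ b)
        * (edgeFactor A q (1 - u) * edgeFactor B q (1 - v)) := by
        rw [show a + b + 2 = a + 1 + (b + 1) by ring, rpow_add (by positivity) (a + 1)]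
        ring
    _ = 4 ^ (a + b + 2) / ((A + R) ^ a * (B + R) ^ b) * edgeKernel A B q u v := by
        rw [edgeKernel, mul_rpow (by norm_num) hq0.le,
          show -(a + b + 3) = -(a + b + 2) - 1 by ring, rpow_sub_one hq0.ne', rpow_neg hq0.le]
        field_simp

end Weights

section MeasureOfBall

/-- The size of the density of `jacobiMeasure α β` on the ball `jacobiBall θ |θ - φ|`, so that this
ball has measure comparable to `|θ - φ| * ballScale α β θ φ`. -/
noncomputable def ballScale (α β θ φ : ℝ) : ℝ :=
  (sinHalfProd θ φ + (θ - φ) ^ 2 / 20) ^ (α + 1 / 2)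
    * (cosHalfProd θ φ + (θ - φ) ^ 2 / 20) ^ (β + 1 / 2)

variable {α β θ φ z : ℝ} {s : Set ℝ}

lemma ballScale_pos (α β : ℝ) (hθ : θ ∈ Ioo 0 π) (hφ : φ ∈ Ioo 0 π) : 0 < ballScale α β θ φ := by
  have := sinHalfProd_pos hθ hφ
  have := cosHalfProd_pos hθ hφ
  rw [ballScale]
  positivity

lemma jacobiMeasure_apply (α β : ℝ) (hs : MeasurableSet s) (hs0 : s ⊆ Ioo 0 π) :
    jacobiMeasure α β s =
      ∫⁻ θ in s, ENNReal.ofReal (sin (θ / 2) ^ (2 * α + 1) * cos (θ / 2) ^ (2 * β + 1)) := by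
  rw [jacobiMeasure, withDensity_apply _ hs, Measure.restrict_restrict hs, inter_eq_left.2 hs0]

lemma jacobiMeasure_pos (α β : ℝ) (hs : IsOpen s) (hne : s.Nonempty) (hs0 : s ⊆ Ioo 0 π) :
    0 < jacobiMeasure α β s := by
  rw [jacobiMeasure_apply α β hs.measurableSet hs0, setLIntegral_pos_iff (by fun_prop)]
  refine (hs.measure_pos volume hne).trans_le (measure_mono fun x hx => ⟨?_, hx⟩)
  exact (ENNReal.ofReal_pos.2 (mul_pos (rpow_pos_of_pos (sin_half_pos (hs0 hx)) _)
    (rpow_pos_of_pos (cos_half_pos (hs0 hx)) _))).ne'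

lemma rpow_two_mul_add_one_le {w D e : ℝ} (hw : 0 ≤ w) (hD : w ^ 2 ≤ D) (he : -(1 / 2) ≤ e) :
    w ^ (2 * e + 1) ≤ D ^ (e + 1 / 2) := by
  calc w ^ (2 * e + 1) = (w ^ 2) ^ (e + 1 / 2) := by
        rw [← rpow_natCast, ← rpow_mul hw]; push_cast; ring_nf
    _ ≤ D ^ (e + 1 / 2) := rpow_le_rpow (sq_nonneg w) hD (by linarith)

lemma sq_le_twenty_mul_of_abs_sub_le {w x A r : ℝ} (hw : 0 ≤ w) (hA : 0 ≤ A)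
    (hwx : |w - x| ≤ |r| / 2) (hx : x ^ 2 ≤ 5 * (A + r ^ 2 / 20)) :
    w ^ 2 ≤ 20 * (A + r ^ 2 / 20) := by
  have hw_le : w ≤ x + |r| / 2 := by linarith [le_of_abs_le hwx]
  have hw_sq : w ^ 2 ≤ (x + |r| / 2) ^ 2 := by gcongr
  nlinarith [sq_nonneg (x - |r| / 2), sq_abs r]

lemma jacobiDensity_le_ballScale (hα : -(1 / 2) ≤ α) (hβ : -(1 / 2) ≤ β) (hθ : θ ∈ Ioo 0 π)
    (hφ : φ ∈ Ioo 0 π) (hz : z ∈ jacobiBall θ |θ - φ|) :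
    sin (z / 2) ^ (2 * α + 1) * cos (z / 2) ^ (2 * β + 1)
      ≤ 20 ^ (α + β + 1) * ballScale α β θ φ := by
  obtain ⟨⟨hz_gt, hz_lt⟩, hz0⟩ := hz
  have hzs := (sin_half_pos hz0).le
  have hzc := (cos_half_pos hz0).le
  have hA := (sinHalfProd_pos hθ hφ).le
  have hB := (cosHalfProd_pos hθ hφ).le
  have hzθ : |z - θ| ≤ |θ - φ| := abs_le.2 ⟨by linarith, by linarith⟩
  have hzθ_half : |z - θ| / 2 ≤ |θ - φ| / 2 := div_le_div_of_nonneg_right hzθ zero_le_two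
  have hsin := sq_le_twenty_mul_of_abs_sub_le hzs hA
    ((abs_sin_half_sub_sin_half_le z θ).trans hzθ_half) (sq_sin_half_le hθ hφ)
  have hcos := sq_le_twenty_mul_of_abs_sub_le hzc hB
    ((abs_cos_half_sub_cos_half_le z θ).trans hzθ_half) (sq_cos_half_le hθ hφ)
  calc sin (z / 2) ^ (2 * α + 1) * cos (z / 2) ^ (2 * β + 1)
      ≤ (20 * (sinHalfProd θ φ + (θ - φ) ^ 2 / 20)) ^ (α + 1 / 2)
        * (20 * (cosHalfProd θ φ + (θ - φ) ^ 2 / 20)) ^ (β + 1 / 2) := by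
        gcongr
        · exact rpow_two_mul_add_one_le hzs hsin hα
        · exact rpow_two_mul_add_one_le hzc hcos hβ
    _ = 20 ^ (α + β + 1) * ballScale α β θ φ := by
        rw [ballScale, mul_rpow (by norm_num) (by positivity),
          mul_rpow (by norm_num) (by positivity),
          show α + β + 1 = α + 1 / 2 + (β + 1 / 2) by ring,
          rpow_add (by norm_num) (α + 1 / 2)]
        ring

lemma jacobiMeasure_jacobiBall_le (hα : -(1 / 2) ≤ α) (hβ : -(1 / 2) ≤ β) (hθ : θ ∈ Ioo 0 π)
    (hφ : φ ∈ Ioo 0 π) :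
    jacobiMeasure α β (jacobiBall θ |θ - φ|)
      ≤ ENNReal.ofReal (2 * 20 ^ (α + β + 1) * |θ - φ| * ballScale α β θ φ) := by
  have hscale := (ballScale_pos α β hθ hφ).le
  have hmeas : MeasurableSet (jacobiBall θ |θ - φ|) := measurableSet_Ioo.inter measurableSet_Ioo
  rw [jacobiMeasure_apply α β hmeas inter_subset_right]
  calc ∫⁻ z in jacobiBall θ |θ - φ|,
        ENNReal.ofReal (sin (z / 2) ^ (2 * α + 1) * cos (z / 2) ^ (2 * β + 1))
      ≤ ENNReal.ofReal (20 ^ (α + β + 1) * ballScale α β θ φ) * volume (jacobiBall θ |θ - φ|) := by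
        rw [← setLIntegral_const]
        exact setLIntegral_mono measurable_const fun z hz =>
          ENNReal.ofReal_le_ofReal (jacobiDensity_le_ballScale hα hβ hθ hφ hz)
    _ ≤ ENNReal.ofReal (20 ^ (α + β + 1) * ballScale α β θ φ)
        * volume (Ioo (θ - |θ - φ|) (θ + |θ - φ|)) := by
        gcongr
        exact inter_subset_left
    _ = ENNReal.ofReal (2 * 20 ^ (α + β + 1) * |θ - φ| * ballScale α β θ φ) := by
        rw [Real.volume_Ioo, ← ENNReal.ofReal_mul (by positivity)]
        ring_nf

lemma jacobiMeasure_jacobiBall_toReal_pos (hα : -(1 / 2) ≤ α) (hβ : -(1 / 2) ≤ β)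
    (hθ : θ ∈ Ioo 0 π) (hφ : φ ∈ Ioo 0 π) (hθφ : 0 < |θ - φ|) :
    0 < (jacobiMeasure α β (jacobiBall θ |θ - φ|)).toReal := by
  refine ENNReal.toReal_pos (jacobiMeasure_pos α β (isOpen_Ioo.inter isOpen_Ioo) ?_
    inter_subset_right).ne' ((jacobiMeasure_jacobiBall_le hα hβ hθ hφ).trans_lt
      ENNReal.ofReal_lt_top).ne
  exact ⟨θ, ⟨by linarith, by linarith⟩, hθ⟩

end MeasureOfBall

section PiMeasureIntegral

variable {α β t : ℝ}

/-- The normalizing constant `Γ(α+1) / (√π Γ(α+1/2))` of the density of `PiMeasure α`. -/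
noncomputable def piConst (α : ℝ) : ℝ := Real.Gamma (α + 1) / (√π * Real.Gamma (α + 1 / 2))

lemma piConst_nonneg (hα : -(1 / 2) < α) : 0 ≤ piConst α := by
  have h1 := Real.Gamma_pos_of_pos (by linarith : 0 < α + 1)
  have h2 := Real.Gamma_pos_of_pos (by linarith : 0 < α + 1 / 2)
  rw [piConst]
  positivity

lemma integral_piMeasure (hα : -(1 / 2) < α) (g : ℝ → ℝ) :
    ∫ u, g u ∂PiMeasure α
      = piConst α * ∫ u in Ioo (-1 : ℝ) 1, (1 - u ^ 2) ^ (α - 1 / 2) * g u := by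
  rw [PiMeasure, if_neg hα.ne', integral_withDensity_eq_integral_toReal_smul (by fun_prop)
    (ae_of_all _ fun _ => ENNReal.ofReal_lt_top), integral_Icc_eq_integral_Ioo,
    ← integral_const_mul]
  refine setIntegral_congr_fun measurableSet_Ioo fun u hu => ?_
  have hu2 := one_sub_sq_nonneg hu
  have hnonneg : 0 ≤ piConst α * (1 - u ^ 2) ^ (α - 1 / 2) :=
    mul_nonneg (piConst_nonneg hα) (rpow_nonneg hu2 _)
  simp only [piConst] at hnonneg ⊢
  rw [ENNReal.toReal_ofReal hnonneg, smul_eq_mul, mul_assoc]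

lemma integral_integral_piMeasure (hα : -(1 / 2) < α) (hβ : -(1 / 2) < β) (g : ℝ → ℝ → ℝ) :
    ∫ u, ∫ v, g u v ∂PiMeasure β ∂PiMeasure α
      = piConst α * piConst β * ∫ u in Ioo (-1 : ℝ) 1, ∫ v in Ioo (-1 : ℝ) 1,
          (1 - u ^ 2) ^ (α - 1 / 2) * (1 - v ^ 2) ^ (β - 1 / 2) * g u v := by
  simp only [integral_piMeasure hα, integral_piMeasure hβ, mul_assoc, integral_const_mul,
    mul_left_comm _ (piConst β)]

/-- The product of the constants in `Hker (α + 1) (β + 1)` and in the densities of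
`PiMeasure (α + 1)` and `PiMeasure (β + 1)`. -/
noncomputable def symConst (α β : ℝ) : ℝ :=
  2 ^ (-(α + 1 + (β + 1) + 2)) / (jacobiMeasure (α + 1) (β + 1) (Ioo 0 π)).toReal
    * (piConst (α + 1) * piConst (β + 1))

lemma Htilde_eq (hα : -(3 / 2) < α) (hβ : -(3 / 2) < β) (t θ φ : ℝ) :
    Htilde α β t θ φ
      = symConst α β * ∫ u in Ioo (-1 : ℝ) 1, ∫ v in Ioo (-1 : ℝ) 1,
          (1 - u ^ 2) ^ (α + 1 / 2) * (1 - v ^ 2) ^ (β + 1 / 2)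
            * symPsi (α + 1) (β + 1) t θ φ u v := by
  have hsymPsi : ∀ u v, symPsi (α + 1) (β + 1) t θ φ u v = 1 / 4 * sin θ * sin φ * sinh (t / 2)
      * (1 / (cosh (t / 2) - 1 + qfun θ φ u v) ^ (α + 1 + (β + 1) + 2)) := by
    intro u v
    rw [symPsi, Psi]
    ring
  simp only [hsymPsi, mul_left_comm _ (1 / 4 * sin θ * sin φ * sinh (t / 2)), integral_const_mul]
  rw [Htilde, Hker, integral_integral_piMeasure (by linarith) (by linarith), symConst,
    show α + 1 - 1 / 2 = α + 1 / 2 by ring, show β + 1 - 1 / 2 = β + 1 / 2 by ring]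
  ring

lemma integral_integral_sub_of_continuousOn {F G : ℝ → ℝ → ℝ}
    (hF : ContinuousOn (fun p : ℝ × ℝ => F p.1 p.2) (Icc (-1) 1 ×ˢ Icc (-1) 1))
    (hG : ContinuousOn (fun p : ℝ × ℝ => G p.1 p.2) (Icc (-1) 1 ×ˢ Icc (-1) 1)) :
    ∫ u in Ioo (-1 : ℝ) 1, ∫ v in Ioo (-1 : ℝ) 1, (F u v - G u v)
      = (∫ u in Ioo (-1 : ℝ) 1, ∫ v in Ioo (-1 : ℝ) 1, F u v)
        - ∫ u in Ioo (-1 : ℝ) 1, ∫ v in Ioo (-1 : ℝ) 1, G u v := by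
  have hint : ∀ {f : ℝ × ℝ → ℝ}, ContinuousOn f (Icc (-1) 1 ×ˢ Icc (-1) 1) →
      Integrable f ((volume.restrict (Ioo (-1) 1)).prod (volume.restrict (Ioo (-1) 1))) := by
    intro f hf
    rw [Measure.prod_restrict]
    exact (hf.integrableOn_compact (isCompact_Icc.prod isCompact_Icc)).mono_set
      (prod_mono Ioo_subset_Icc_self Ioo_subset_Icc_self)
  exact integral_integral_sub (hint hF) (hint hG)

lemma Htilde_sub_eq (hα : -(1 / 2) ≤ α) (hβ : -(1 / 2) ≤ β) (ht : t ≠ 0) (θ θ' φ : ℝ) :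
    Htilde α β t θ φ - Htilde α β t θ' φ
      = symConst α β * ∫ u in Ioo (-1 : ℝ) 1, ∫ v in Ioo (-1 : ℝ) 1,
          (1 - u ^ 2) ^ (α + 1 / 2) * (1 - v ^ 2) ^ (β + 1 / 2)
            * (symPsi (α + 1) (β + 1) t θ φ u v - symPsi (α + 1) (β + 1) t θ' φ u v) := by
  have hcont : ∀ z, ContinuousOn (fun p : ℝ × ℝ => (1 - p.1 ^ 2) ^ (α + 1 / 2)
      * (1 - p.2 ^ 2) ^ (β + 1 / 2) * symPsi (α + 1) (β + 1) t z φ p.1 p.2)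
      (Icc (-1) 1 ×ˢ Icc (-1) 1) := fun z =>
    ((ContinuousOn.rpow_const (by fun_prop) fun _ _ => Or.inr (by linarith)).mul
      (ContinuousOn.rpow_const (by fun_prop) fun _ _ => Or.inr (by linarith))).mul
      (continuousOn_symPsi (α + 1) (β + 1) z φ ht)
  simp only [mul_sub]
  rw [integral_integral_sub_of_continuousOn (hcont θ) (hcont θ'), mul_sub,
    ← Htilde_eq (by linarith) (by linarith), ← Htilde_eq (by linarith) (by linarith)]

end PiMeasureIntegral

section KernelEstimate

variable {α β θ θ' φ t u v : ℝ}

/-- The constant in the pointwise bound on the weighted increment of `symPsi`. -/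
noncomputable def incrConst (α β : ℝ) : ℝ :=
  32 * (α + β + 4) * 7 ^ (α + β + 4) * 4 ^ (α + β + 3)

lemma incrConst_pos (h : -1 ≤ α + β) : 0 < incrConst α β := by
  have : 0 < α + β + 4 := by linarith
  rw [incrConst]
  positivity

lemma abs_weight_mul_symPsi_sub_le (hα : -(1 / 2) ≤ α) (hβ : -(1 / 2) ≤ β) (ht : 0 < t)
    (hθ : θ ∈ Ioo 0 π) (hθ' : θ' ∈ Ioo 0 π) (hφ : φ ∈ Ioo 0 π) (hu : u ∈ Ioo (-1) 1)
    (hv : v ∈ Ioo (-1) 1) (hθφ : θ ≠ φ) (hθθ' : 2 * |θ - θ'| ≤ |θ - φ|) :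
    |(1 - u ^ 2) ^ (α + 1 / 2) * (1 - v ^ 2) ^ (β + 1 / 2)
        * (symPsi (α + 1) (β + 1) t θ φ u v - symPsi (α + 1) (β + 1) t θ' φ u v)| ≤
      incrConst α β * |θ - θ'| / ballScale α β θ φ
        * edgeKernel (sinHalfProd θ φ) (cosHalfProd θ φ) (qfun θ φ u v) u v := by
  have hu' := Ioo_subset_Icc_self hu
  have hv' := Ioo_subset_Icc_self hv
  have hR : 0 < (θ - φ) ^ 2 / 20 := by have := sub_ne_zero.2 hθφ; positivity
  have hq : 0 < qfun θ φ u v := hR.trans_le (sq_div_twenty_le_qfun hθ hφ hu'.2 hv'.2)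
  have hincr := abs_symPsi_sub_le (α := α + 1) (β := β + 1) (by linarith) ht hθ hθ' hφ hu' hv' hq
    hθθ'
  have hsin := sq_sin_half_le hφ hθ
  have hcos := sq_cos_half_le hφ hθ
  rw [sinHalfProd_comm, sub_sq_comm] at hsin
  rw [cosHalfProd_comm, sub_sq_comm] at hcos
  have hweight := weight_mul_weight_mul_le (a := α + 1 / 2) (b := β + 1 / 2) (by linarith)
    (by linarith) hu hv (sinHalfProd_pos hθ hφ).le (cosHalfProd_pos hθ hφ).le hR
    (sin_half_pos hφ).le (cos_half_pos hφ).le hsin hcos (add_mul_add_mul_le_qfun hθ hφ u v)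
  rw [show α + 1 + (β + 1) + 2 = α + β + 4 by ring] at hincr
  rw [show α + 1 / 2 + (β + 1 / 2) + 3 = α + β + 4 by ring,
    show α + 1 / 2 + (β + 1 / 2) + 2 = α + β + 3 by ring, ← thickenedProd, ← ballScale] at hweight
  have hu2 := one_sub_sq_nonneg hu
  have hv2 := one_sub_sq_nonneg hv
  have hN : 0 ≤ α + β + 4 := by linarith
  set w := (1 - u ^ 2) ^ (α + 1 / 2) * (1 - v ^ 2) ^ (β + 1 / 2)
  have hw0 : 0 ≤ w := by positivity
  rw [abs_mul, abs_of_nonneg hw0]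
  calc w * |symPsi (α + 1) (β + 1) t θ φ u v - symPsi (α + 1) (β + 1) t θ' φ u v|
      ≤ w * (32 * (α + β + 4) * 7 ^ (α + β + 4) * |θ - θ'|
        * (qfun θ φ u v ^ (-(α + β + 4)) * thickenedProd θ φ (qfun θ φ u v))) := by gcongr
    _ = 32 * (α + β + 4) * 7 ^ (α + β + 4) * |θ - θ'|
        * (w * (qfun θ φ u v ^ (-(α + β + 4)) * thickenedProd θ φ (qfun θ φ u v))) := by ring
    _ ≤ _ := mul_le_mul_of_nonneg_left hweight (by positivity)
    _ = _ := by rw [incrConst]; ring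

lemma abs_Htilde_sub_le (hα : -(1 / 2) ≤ α) (hβ : -(1 / 2) ≤ β) (ht : 0 < t)
    (hθ : θ ∈ Ioo 0 π) (hθ' : θ' ∈ Ioo 0 π) (hφ : φ ∈ Ioo 0 π)
    (hθφ : θ ≠ φ) (hθθ' : 2 * |θ - θ'| ≤ |θ - φ|) :
    |Htilde α β t θ φ - Htilde α β t θ' φ| ≤
      320 * |symConst α β| * incrConst α β * |θ - θ'| / (|θ - φ| ^ 2 * ballScale α β θ φ) := by
  have hR : 0 < (θ - φ) ^ 2 / 20 := by have := sub_ne_zero.2 hθφ; positivity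
  have hM : 0 ≤ incrConst α β * |θ - θ'| / ballScale α β θ φ := by
    have := ballScale_pos α β hθ hφ
    have := incrConst_pos (by linarith : -1 ≤ α + β)
    positivity
  have hA := (sinHalfProd_pos hθ hφ).le
  have hB := (cosHalfProd_pos hθ hφ).le
  have hint := abs_setIntegral_setIntegral_le_of_abs_le_edgeKernel hR hA hB hM fun u hu v hv => by
    have hQ : 0 < (θ - φ) ^ 2 / 20 + (1 - u) * sinHalfProd θ φ + (1 - v) * cosHalfProd θ φ := by
      linarith [mul_nonneg (sub_nonneg.2 hu.2.le) hA, mul_nonneg (sub_nonneg.2 hv.2.le) hB]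
    exact (abs_weight_mul_symPsi_sub_le hα hβ ht hθ hθ' hφ hu hv hθφ hθθ').trans
      (mul_le_mul_of_nonneg_left (edgeKernel_anti hA hB hQ (add_mul_add_mul_le_qfun hθ hφ u v)
        hu.2.le hv.2.le) hM)
  rw [Htilde_sub_eq hα hβ ht.ne', abs_mul]
  refine (mul_le_mul_of_nonneg_left hint (abs_nonneg _)).trans_eq ?_
  rw [sq_abs]
  field_simp
  ring

end KernelEstimate

/-- smoothness estimate for the symmetrized kernel `H̃_t^{α,β}`. -/
theorem Htilde_smoothness (α β : ℝ) (hα : -(1 / 2) ≤ α) (hβ : -(1 / 2) ≤ β) :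
    ∃ C : ℝ, 0 < C ∧
      ∀ θ ∈ Ioo (0 : ℝ) π, ∀ θ' ∈ Ioo (0 : ℝ) π, ∀ φ ∈ Ioo (0 : ℝ) π,
        |θ - φ| > 2 * |θ - θ'| →
        ∀ t : ℝ, 0 < t →
          |Htilde α β t θ φ - Htilde α β t θ' φ|
            ≤ C * (|θ - θ'| / |θ - φ|) *
                (1 / (jacobiMeasure α β (jacobiBall θ |θ - φ|)).toReal) := by
  have hincr := incrConst_pos (by linarith : -1 ≤ α + β)
  refine ⟨2 * 20 ^ (α + β + 1) * (320 * (|symConst α β| + 1) * incrConst α β), by positivity, ?_⟩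
  intro θ hθ θ' hθ' φ hφ hdist t ht
  have hθφ : 0 < |θ - φ| := (by positivity : 0 ≤ 2 * |θ - θ'|).trans_lt hdist
  have hscale := ballScale_pos α β hθ hφ
  have hμ := jacobiMeasure_jacobiBall_toReal_pos hα hβ hθ hφ hθφ
  have hμ_le := ENNReal.toReal_le_of_le_ofReal (by positivity)
    (jacobiMeasure_jacobiBall_le hα hβ hθ hφ)
  set K := 320 * (|symConst α β| + 1) * incrConst α β with hK
  set μ := (jacobiMeasure α β (jacobiBall θ |θ - φ|)).toReal
  calc |Htilde α β t θ φ - Htilde α β t θ' φ|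
      ≤ 320 * |symConst α β| * incrConst α β * |θ - θ'| / (|θ - φ| ^ 2 * ballScale α β θ φ) :=
        abs_Htilde_sub_le hα hβ ht hθ hθ' hφ (sub_ne_zero.1 (abs_pos.1 hθφ)) hdist.le
    _ ≤ K * |θ - θ'| / (|θ - φ| ^ 2 * ballScale α β θ φ) := by
        rw [hK]; gcongr; linarith
    _ = 2 * 20 ^ (α + β + 1) * K * (|θ - θ'| / |θ - φ|)
        * (1 / (2 * 20 ^ (α + β + 1) * |θ - φ| * ballScale α β θ φ)) := by field_simp
    _ ≤ 2 * 20 ^ (α + β + 1) * K * (|θ - θ'| / |θ - φ|) * (1 / μ) := by gcongr
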